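/- If E is a ceer with infinitely many equivalence classes such that the identity relation on ℕ is computably reducible to E (i.e., E is a light ceer with infinitely many classes), then E⁺ is computably bireducible with =^{ce}. -/

import Mathlib

/-- The `e`-th partial computable function. -/
def phi (e : ℕ) : ℕ →. ℕ :=
  Nat.Partrec.Code.eval (Denumerable.ofNat Nat.Partrec.Code e)

/-- `W_e`, the `e`-th c.e. set: the domain of `φ_e`. -/
def WSet (e : ℕ) : Set ℕ := (phi e).Dom

/-- The `E`-equivalence class of `k`. -/
def classOf (E : ℕ → ℕ → Prop) (k : ℕ) : Set ℕ := {x | E k x}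

/-- Computable reducibility of binary relations on ℕ. -/
def Reduces (E F : ℕ → ℕ → Prop) : Prop :=
  ∃ f : ℕ → ℕ, Computable f ∧ ∀ m n, E m n ↔ F (f m) (f n)

/-- The computable FS-jump of `E`: `e E⁺ e'` iff the set of `E`-classes of elements
of `ran φ_e` equals the set of `E`-classes of elements of `ran φ_{e'}`. -/
def FSJump (E : ℕ → ℕ → Prop) : ℕ → ℕ → Prop :=
  fun e e' => classOf E '' (phi e).ran = classOf E '' (phi e').ran

/-- Equality of c.e. sets: `e =^{ce} e'` iff `W_e = W_{e'}`. -/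
def eqCE : ℕ → ℕ → Prop := fun e e' => WSet e = WSet e'

/-- A ceer: an equivalence relation on ℕ which is c.e. as a set of pairs. -/
def Ceer (E : ℕ → ℕ → Prop) : Prop :=
  Equivalence E ∧ ∃ e : ℕ, ∀ m n : ℕ, E m n ↔ Nat.pair m n ∈ WSet e

open Nat.Partrec in
/-- The s-m-n theorem for `phi`. -/
theorem phi_smn {F : ℕ → ℕ →. ℕ} (hF : Partrec₂ F) :
    ∃ f : ℕ → ℕ, Computable f ∧ ∀ e, phi (f e) = F e := by
  obtain ⟨c, hc⟩ := Code.exists_code.1 (Partrec₂.unpaired'.2 hF)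
  refine ⟨fun e => Encodable.encode (Code.curry c e), ?_, ?_⟩
  · exact Computable.encode.comp
      (Code.primrec₂_curry.to_comp.comp (Computable.const c) Computable.id)
  · intro e
    funext x
    simp [phi, Code.eval_curry, hc, Nat.unpaired]

open Nat.Partrec in
theorem phi_partrec : Partrec₂ phi :=
  Code.eval_part.comp ((Computable.ofNat Code).comp Computable.fst) Computable.snd

open Nat.Partrec in
/-- Search for a witness that `x` is related to an element of the range of `φ_e`. -/
def searchOpt (c : Code) (p : ℕ × ℕ) (t : ℕ) : Option ℕ :=
  (Code.evaln t.unpair.1 (Denumerable.ofNat Code p.1) t.unpair.2.unpair.1).bind fun k =>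
    Code.evaln t.unpair.2.unpair.2 c (Nat.pair k p.2)

theorem search_aux {C : Type*} [Primcodable C] (ev : ℕ → C → ℕ → Option ℕ)
    (hev : Computable fun a : (ℕ × C) × ℕ => ev a.1.1 a.1.2 a.2)
    (d : ℕ → C) (hd : Computable d) (c : C) (u v w : ℕ → ℕ) (pr : ℕ → ℕ → ℕ)
    (hu : Computable u) (hv : Computable v) (hw : Computable w) (hpr : Computable₂ pr) :
    Computable fun q : (ℕ × ℕ) × ℕ =>
      (ev (u q.2) (d q.1.1) (v q.2)).bind fun k => ev (w q.2) c (pr k q.1.2) := by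
  have h1 : Computable fun q : (ℕ × ℕ) × ℕ => ev (u q.2) (d q.1.1) (v q.2) :=
    hev.comp (((hu.comp Computable.snd).pair
      (hd.comp (Computable.fst.comp Computable.fst))).pair (hv.comp Computable.snd))
  have hp : Computable fun r : ((ℕ × ℕ) × ℕ) × ℕ => pr r.2 r.1.1.2 :=
    hpr.comp Computable.snd (Computable.snd.comp (Computable.fst.comp Computable.fst))
  have hs : Computable fun r : ((ℕ × ℕ) × ℕ) × ℕ => w r.1.2 :=
    hw.comp (Computable.snd.comp Computable.fst)
  have h2 : Computable fun r : ((ℕ × ℕ) × ℕ) × ℕ => ev (w r.1.2) c (pr r.2 r.1.1.2) :=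
    hev.comp ((hs.pair (Computable.const c)).pair hp)
  exact Computable.option_bind h1 h2.to₂

theorem unpair_fst_computable : Computable fun t : ℕ => t.unpair.1 :=
  Computable.fst.comp Computable.unpair

theorem unpair_snd_computable : Computable fun t : ℕ => t.unpair.2 :=
  Computable.snd.comp Computable.unpair

open Nat.Partrec in
theorem searchOpt_computable (c : Code) : Computable₂ (searchOpt c) :=
  Computable₂.mk (search_aux Code.evaln Code.primrec_evaln.to_comp
    (Denumerable.ofNat Code) (Computable.ofNat Code) c
    (fun t => t.unpair.1) (fun t => t.unpair.2.unpair.1) (fun t => t.unpair.2.unpair.2) Nat.pair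
    unpair_fst_computable (unpair_fst_computable.comp unpair_snd_computable)
    (unpair_snd_computable.comp unpair_snd_computable) Primrec₂.natPair.to_comp)

open Nat.Partrec in
theorem searchOpt_dom (c : Code) (e x : ℕ) :
    (Nat.rfindOpt (searchOpt c (e, x))).Dom ↔
      ∃ k ∈ (phi e).ran, (Code.eval c (Nat.pair k x)).Dom := by
  rw [Nat.rfindOpt_dom]
  constructor
  · rintro ⟨t, a, h⟩
    obtain ⟨k, hk, ha⟩ := Option.bind_eq_some_iff.1 h
    exact ⟨k, ⟨_, Code.evaln_sound hk⟩, Part.dom_iff_mem.2 ⟨a, Code.evaln_sound ha⟩⟩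
  · rintro ⟨k, ⟨n, hk⟩, hd⟩
    obtain ⟨a, ha⟩ := Part.dom_iff_mem.1 hd
    obtain ⟨s, hs⟩ := Code.evaln_complete.1 hk
    obtain ⟨s', hs'⟩ := Code.evaln_complete.1 ha
    refine ⟨Nat.pair s (Nat.pair n s'), a, ?_⟩
    simp only [searchOpt, Nat.unpair_pair]
    exact Option.bind_eq_some_iff.2 ⟨k, hs, hs'⟩

/-- If `E` is a light ceer with infinitely many classes (i.e. `id ≤ E`), then `E⁺` is
computably bireducible with `=^{ce}`. -/
theorem light_ceer_high (E : ℕ → ℕ → Prop) (hE : Ceer E)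
    (hinf : (Set.range (classOf E)).Infinite)
    (hlight : Reduces (@Eq ℕ) E) :
    Reduces (FSJump E) eqCE ∧ Reduces eqCE (FSJump E) := by
  obtain ⟨heq, c, hc⟩ := hE
  have hcl : ∀ a b, classOf E a = classOf E b ↔ E a b := by
    intro a b
    constructor
    · intro h
      have : b ∈ classOf E b := heq.refl b
      rw [← h] at this
      exact this
    · intro h
      ext x
      exact ⟨fun hx => heq.trans (heq.symm h) hx, fun hx => heq.trans h hx⟩
  constructor
  · have hP : Partrec₂ fun e x : ℕ =>
        Nat.rfindOpt (searchOpt (Denumerable.ofNat Nat.Partrec.Code c) (e, x)) :=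
      Partrec.rfindOpt (searchOpt_computable _)
    obtain ⟨f, hf, hfe⟩ := phi_smn hP
    have hW : ∀ e x, x ∈ WSet (f e) ↔ classOf E x ∈ classOf E '' (phi e).ran := by
      intro e x
      have h1 : x ∈ WSet (f e) ↔
          (Nat.rfindOpt (searchOpt (Denumerable.ofNat Nat.Partrec.Code c) (e, x))).Dom := by
        simp only [WSet, hfe]
        rfl
      rw [h1, searchOpt_dom]
      constructor
      · rintro ⟨k, hk, hd⟩
        exact ⟨k, hk, (hcl _ _).2 ((hc k x).2 hd)⟩
      · rintro ⟨k, hk, h⟩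
        exact ⟨k, hk, (hc k x).1 ((hcl _ _).1 h)⟩
    refine ⟨f, hf, fun m n => ⟨fun h => ?_, fun h => ?_⟩⟩
    · ext x
      rw [hW, hW]
      exact iff_of_eq (congrArg (classOf E x ∈ ·) h)
    · have h' : ∀ x, classOf E x ∈ classOf E '' (phi m).ran ↔
          classOf E x ∈ classOf E '' (phi n).ran := by
        intro x
        rw [← hW, ← hW]
        exact iff_of_eq (congrArg (x ∈ ·) h)
      ext S
      constructor
      · rintro ⟨k, hk, rfl⟩
        exact (h' k).1 ⟨k, hk, rfl⟩
      · rintro ⟨k, hk, rfl⟩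
        exact (h' k).2 ⟨k, hk, rfl⟩
  · obtain ⟨g, hg, hgE⟩ := hlight
    have hP : Partrec₂ fun e x : ℕ => (phi e x).map fun _ => g x :=
      Partrec.map phi_partrec (hg.comp (Computable.snd.comp Computable.fst))
    obtain ⟨f, hf, hfe⟩ := phi_smn hP
    have hR : ∀ e, (phi (f e)).ran = g '' WSet e := by
      intro e
      rw [hfe]
      ext y
      constructor
      · rintro ⟨x, hx⟩
        obtain ⟨a, ha, rfl⟩ := (Part.mem_map_iff _).1 hx
        exact ⟨x, Part.dom_iff_mem.2 ⟨a, ha⟩, rfl⟩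
      · rintro ⟨x, hx, rfl⟩
        obtain ⟨a, ha⟩ := Part.dom_iff_mem.1 hx
        exact ⟨x, (Part.mem_map_iff _).2 ⟨a, ha, rfl⟩⟩
    have hinj : Function.Injective fun x => classOf E (g x) := by
      intro x y h
      exact (hgE x y).2 ((hcl _ _).1 h)
    refine ⟨f, hf, fun m n => ?_⟩
    simp only [eqCE, FSJump, hR, Set.image_image]
    exact hinj.image_injective.eq_iff.symm
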